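/- (Pointwise form of the W_4 row of the G2 classification theorem.) Let φ ∈ Δ be a unit spinor and u ∈ ℝ^7, and let S_u ∈ End(ℝ^7) be defined by ⟨S_u(x), y⟩ = Φ_φ(u, x, y) for all x, y ∈ ℝ^7 (so S_u = u⌟Φ_φ, equivalently S_u(x) = u×x). Then for every x ∈ ℝ^7: S_u(x)·φ = x·u·φ + ⟨u, x⟩·φ. -/

import Mathlib

open RealInnerProductSpace

noncomputable section

/-- The spin representation space Δ = ℝ^8. -/
abbrev Δ : Type := EuclideanSpace ℝ (Fin 8)

/-- The standard skew endomorphism E_{ij} of ℝ^8: u_i ↦ u_j, u_j ↦ -u_i, others ↦ 0. -/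
def E (i j : Fin 8) : Δ →ₗ[ℝ] Δ where
  toFun v := v i • EuclideanSpace.single j (1 : ℝ) - v j • EuclideanSpace.single i (1 : ℝ)
  map_add' x y := by
    simp only [PiLp.add_apply, add_smul]
    module
  map_smul' c x := by
    simp only [PiLp.smul_apply, smul_eq_mul, RingHom.id_apply, mul_smul]
    module

/-- The seven Clifford endomorphisms e_1, …, e_7 (indexed 0,…,6). -/
def cliff : Fin 7 → (Δ →ₗ[ℝ] Δ) :=
  ![  E 0 7 + E 1 6 - E 2 5 - E 3 4,
    - E 0 6 + E 1 7 + E 2 4 - E 3 5,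
    - E 0 5 + E 1 4 - E 2 7 + E 3 6,
    - E 0 4 - E 1 5 - E 2 6 - E 3 7,
    - E 0 2 - E 1 3 + E 4 6 + E 5 7,
      E 0 3 - E 1 2 - E 4 7 + E 5 6,
      E 0 1 - E 2 3 - E 4 5 + E 6 7]

/-- j = e_1 ∘ e_2 ∘ e_3 ∘ e_4 ∘ e_5 ∘ e_6. -/
def jmap : Δ →ₗ[ℝ] Δ :=
  cliff 0 ∘ₗ cliff 1 ∘ₗ cliff 2 ∘ₗ cliff 3 ∘ₗ cliff 4 ∘ₗ cliff 5

/-- Clifford multiplication of a vector x ∈ ℝ^6 on a spinor. -/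
def cm6 (x : EuclideanSpace ℝ (Fin 6)) (φ : Δ) : Δ :=
  ∑ i : Fin 6, x i • cliff i.castSucc φ

/-- Clifford multiplication of a vector x ∈ ℝ^7 on a spinor. -/
def cm7 (x : EuclideanSpace ℝ (Fin 7)) (φ : Δ) : Δ :=
  ∑ i : Fin 7, x i • cliff i φ


/-- Standard basis vector of ℝ^7. -/
def v7 (i : Fin 7) : EuclideanSpace ℝ (Fin 7) := EuclideanSpace.single i (1 : ℝ)

/-- The G₂ 3-form Φ_φ(x,y,z) = ⟨x·y·z·φ, φ⟩ on ℝ^7. -/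
def PhiP (φ : Δ) (x y z : EuclideanSpace ℝ (Fin 7)) : ℝ :=
  ⟪cm7 x (cm7 y (cm7 z φ)), φ⟫

/-- Action of a trilinear form on ℝ^7 on a spinor:
τ·χ := Σ_{i<j<k} τ(v_i,v_j,v_k) e_i(e_j(e_k(χ))). -/
def tact7 (τ : EuclideanSpace ℝ (Fin 7) → EuclideanSpace ℝ (Fin 7) →
    EuclideanSpace ℝ (Fin 7) → ℝ) (χ : Δ) : Δ :=
  ∑ i : Fin 7, ∑ j : Fin 7, ∑ k : Fin 7,
    if i < j ∧ j < k then
      τ (v7 i) (v7 j) (v7 k) • cliff i (cliff j (cliff k χ))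
    else 0

/-- Action of a bilinear form on ℝ^7 on a spinor:
σ·χ := Σ_{i<j} σ(v_i,v_j) e_i(e_j(χ)). -/
def bact7 (σ : EuclideanSpace ℝ (Fin 7) → EuclideanSpace ℝ (Fin 7) → ℝ) (χ : Δ) : Δ :=
  ∑ i : Fin 7, ∑ j : Fin 7,
    if i < j then σ (v7 i) (v7 j) • cliff i (cliff j χ) else 0

/-!
Clifford multiplication `c x` on spinors is skew and squares to `-‖x‖²`, so `x ↦ c x φ` is
`‖φ‖` times an isometry of `V` into `φᗮ`. As `dim Δ = dim ℝ⁷ + 1`, this map is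
onto `φᗮ`. The spinor `c x (c u φ) + ⟪u, x⟫ • φ` is orthogonal to `φ`, hence of the form `c y φ`,
and pairing it with the spinors `c z φ` identifies `‖φ‖² • y` with `u × x`.
-/

section CliffordModule

variable {V S : Type*} [NormedAddCommGroup V] [InnerProductSpace ℝ V]
  [NormedAddCommGroup S] [InnerProductSpace ℝ S]

/-- `c : V → End S` makes `S` a Clifford module over `V`, with the sign convention `x · x = -‖x‖²`
and with vectors acting by skew-adjoint endomorphisms. -/
structure IsCliffordMul (c : V →ₗ[ℝ] S →ₗ[ℝ] S) : Prop where
  inner_left : ∀ x φ ψ, ⟪c x φ, ψ⟫ = -⟪φ, c x ψ⟫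
  apply_apply_self : ∀ x φ, c x (c x φ) = -(⟪x, x⟫ • φ)

namespace IsCliffordMul

variable {c : V →ₗ[ℝ] S →ₗ[ℝ] S}

theorem inner_apply_self_left (hc : IsCliffordMul c) (x : V) (φ : S) : ⟪c x φ, φ⟫ = 0 := by
  linarith [hc.inner_left x φ φ, real_inner_comm φ (c x φ)]

theorem apply_apply_add_swap (hc : IsCliffordMul c) (x y : V) (φ : S) :
    c x (c y φ) + c y (c x φ) = -((2 * ⟪x, y⟫) • φ) := by
  have polarized := hc.apply_apply_self (x + y) φ
  simp only [map_add, LinearMap.add_apply, inner_add_left, inner_add_right,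
    hc.apply_apply_self, real_inner_comm x y] at polarized
  linear_combination (norm := module) polarized

theorem inner_apply_apply (hc : IsCliffordMul c) (x y : V) (φ : S) :
    ⟪c x φ, c y φ⟫ = ⟪x, y⟫ * ⟪φ, φ⟫ := by
  have anticomm := congrArg (⟪·, φ⟫) (hc.apply_apply_add_swap x y φ)
  simp only [inner_add_left, inner_neg_left, real_inner_smul_left, hc.inner_left x (c y φ),
    hc.inner_left y (c x φ), real_inner_comm (c x φ) (c y φ)] at anticomm
  linarith

theorem flip_apply_injective (hc : IsCliffordMul c) {φ : S} (hφ : φ ≠ 0) :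
    Function.Injective (c.flip φ) := by
  refine (injective_iff_map_eq_zero _).2 fun x hx => ?_
  have norm_sq := hc.inner_apply_apply x x φ
  rw [← LinearMap.flip_apply, hx, inner_zero_left] at norm_sq
  simpa [hφ] using norm_sq.symm

theorem range_flip_eq_orthogonal (hc : IsCliffordMul c)
    (hdim : Module.finrank ℝ S = Module.finrank ℝ V + 1) {φ : S} (hφ : φ ≠ 0) :
    (c.flip φ).range = (ℝ ∙ φ)ᗮ := by
  have : Fact (Module.finrank ℝ S = Module.finrank ℝ V + 1) := ⟨hdim⟩
  have : FiniteDimensional ℝ S := .of_finrank_eq_succ hdim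
  refine Submodule.eq_of_le_of_finrank_eq ?_ ?_
  · rintro _ ⟨x, rfl⟩
    exact Submodule.mem_orthogonal_singleton_iff_inner_left.2 (hc.inner_apply_self_left x φ)
  · rw [LinearMap.finrank_range_of_inj (hc.flip_apply_injective hφ),
      Submodule.finrank_orthogonal_span_singleton (n := Module.finrank ℝ V) hφ]

theorem inner_apply_apply_add_inner_smul_self (hc : IsCliffordMul c) (u x : V) (φ : S) :
    ⟪c x (c u φ) + ⟪u, x⟫ • φ, φ⟫ = 0 := by
  rw [inner_add_left, real_inner_smul_left, hc.inner_left, hc.inner_apply_apply, neg_add_cancel]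

theorem inner_apply_apply_add_inner_smul_apply (hc : IsCliffordMul c) (u x z : V) (φ : S) :
    ⟪c x (c u φ) + ⟪u, x⟫ • φ, c z φ⟫ = ⟪c u (c x (c z φ)), φ⟫ := by
  rw [inner_add_left, real_inner_smul_left, real_inner_comm (c z φ) φ,
    hc.inner_apply_self_left, mul_zero, add_zero, hc.inner_left u, hc.inner_left x (c z φ), neg_neg,
    real_inner_comm]

end IsCliffordMul

/-- The vector `w` is the cross product `u × x` determined by the spinor `φ`. -/
theorem W4_row_general {c : V →ₗ[ℝ] S →ₗ[ℝ] S} (hc : IsCliffordMul c)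
    (hdim : Module.finrank ℝ S = Module.finrank ℝ V + 1) (φ : S) {u x w : V}
    (hw : ∀ z, ⟪w, z⟫ = ⟪c u (c x (c z φ)), φ⟫) :
    c w φ = ⟪φ, φ⟫ • (c x (c u φ) + ⟪u, x⟫ • φ) := by
  rcases eq_or_ne φ 0 with rfl | hφ
  · simp
  obtain ⟨y, hy⟩ : c x (c u φ) + ⟪u, x⟫ • φ ∈ (c.flip φ).range := by
    rw [hc.range_flip_eq_orthogonal hdim hφ, Submodule.mem_orthogonal_singleton_iff_inner_left]
    exact hc.inner_apply_apply_add_inner_smul_self u x φ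
  rw [LinearMap.flip_apply] at hy
  have w_eq : w = ⟪φ, φ⟫ • y := ext_inner_right ℝ fun z => by
    rw [hw, ← hc.inner_apply_apply_add_inner_smul_apply, ← hy, hc.inner_apply_apply,
      real_inner_smul_left, mul_comm]
  rw [w_eq, map_smul, LinearMap.smul_apply, hy]

end CliffordModule

theorem inner_E_eq_sub (i j : Fin 8) (φ ψ : Δ) : ⟪E i j φ, ψ⟫ = φ i * ψ j - φ j * ψ i := by
  simp [E, inner_sub_left, real_inner_smul_left, EuclideanSpace.inner_single_left]

theorem inner_E_left (i j : Fin 8) (φ ψ : Δ) : ⟪E i j φ, ψ⟫ = -⟪φ, E i j ψ⟫ := by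
  rw [real_inner_comm (E i j ψ) φ, inner_E_eq_sub, inner_E_eq_sub]
  ring

theorem inner_cliff_left (i : Fin 7) (φ ψ : Δ) : ⟪cliff i φ, ψ⟫ = -⟪φ, cliff i ψ⟫ := by
  fin_cases i <;>
  · simp [cliff, inner_add_left, inner_add_right, inner_sub_left, inner_sub_right, inner_E_left]
    ring

theorem inner_cm7_left (x : EuclideanSpace ℝ (Fin 7)) (φ ψ : Δ) :
    ⟪cm7 x φ, ψ⟫ = -⟪φ, cm7 x ψ⟫ := by
  simp only [cm7, sum_inner, inner_sum, real_inner_smul_left, real_inner_smul_right,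
    inner_cliff_left, mul_neg, Finset.sum_neg_distrib]

theorem cm7_eq (x : EuclideanSpace ℝ (Fin 7)) (φ : Δ) :
    cm7 x φ = !₂[
      -x 0 * φ 7 + x 1 * φ 6 + x 2 * φ 5 + x 3 * φ 4 + x 4 * φ 2 - x 5 * φ 3 - x 6 * φ 1,
      -x 0 * φ 6 - x 1 * φ 7 - x 2 * φ 4 + x 3 * φ 5 + x 4 * φ 3 + x 5 * φ 2 + x 6 * φ 0,
      x 0 * φ 5 - x 1 * φ 4 + x 2 * φ 7 + x 3 * φ 6 - x 4 * φ 0 - x 5 * φ 1 + x 6 * φ 3,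
      x 0 * φ 4 + x 1 * φ 5 - x 2 * φ 6 + x 3 * φ 7 - x 4 * φ 1 + x 5 * φ 0 - x 6 * φ 2,
      -x 0 * φ 3 + x 1 * φ 2 + x 2 * φ 1 - x 3 * φ 0 - x 4 * φ 6 + x 5 * φ 7 + x 6 * φ 5,
      -x 0 * φ 2 - x 1 * φ 3 - x 2 * φ 0 - x 3 * φ 1 - x 4 * φ 7 - x 5 * φ 6 - x 6 * φ 4,
      x 0 * φ 1 - x 1 * φ 0 + x 2 * φ 3 - x 3 * φ 2 + x 4 * φ 4 + x 5 * φ 5 - x 6 * φ 7,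
      x 0 * φ 0 + x 1 * φ 1 - x 2 * φ 2 - x 3 * φ 3 + x 4 * φ 5 - x 5 * φ 4 + x 6 * φ 6] := by
  ext k
  fin_cases k <;>
  · simp [cm7, cliff, E, Fin.sum_univ_seven]
    ring

theorem cm7_cm7_self (x : EuclideanSpace ℝ (Fin 7)) (φ : Δ) :
    cm7 x (cm7 x φ) = -(⟪x, x⟫ • φ) := by
  rw [PiLp.inner_apply, Fin.sum_univ_seven, cm7_eq, cm7_eq]
  ext k
  fin_cases k <;>
  · simp
    ring

/-- Clifford multiplication `cm7` of `ℝ⁷` on `Δ` as a bilinear map. -/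
def cm7Bilin : EuclideanSpace ℝ (Fin 7) →ₗ[ℝ] Δ →ₗ[ℝ] Δ :=
  LinearMap.mk₂ ℝ cm7
    (fun x y φ => by simp only [cm7, PiLp.add_apply, add_smul, Finset.sum_add_distrib])
    (fun r x φ => by simp only [cm7, PiLp.smul_apply, smul_assoc, Finset.smul_sum])
    (fun x φ ψ => by simp only [cm7, map_add, smul_add, Finset.sum_add_distrib])
    (fun r x φ => by simp only [cm7, map_smul, smul_comm _ r, Finset.smul_sum])

theorem cm7Bilin_apply (x : EuclideanSpace ℝ (Fin 7)) (φ : Δ) : cm7Bilin x φ = cm7 x φ := rfl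

theorem isCliffordMul_cm7Bilin : IsCliffordMul cm7Bilin where
  inner_left := inner_cm7_left
  apply_apply_self := cm7_cm7_self

/-- Pointwise form of the W₄ row of the G₂ classification theorem: for u ∈ ℝ^7,
the endomorphism S_u = u⌟Φ_φ (i.e. S_u(x) = u×x, characterised by
⟨S_u(x), y⟩ = Φ_φ(u,x,y)) satisfies S_u(x)·φ = x·u·φ + ⟨u,x⟩·φ for every x. -/
theorem W4_row (φ : Δ) (hφ : ⟪φ, φ⟫ = 1) (u : EuclideanSpace ℝ (Fin 7))
    (Su : EuclideanSpace ℝ (Fin 7) →ₗ[ℝ] EuclideanSpace ℝ (Fin 7))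
    (hSu : ∀ x y : EuclideanSpace ℝ (Fin 7), ⟪Su x, y⟫ = PhiP φ u x y) :
    ∀ x : EuclideanSpace ℝ (Fin 7),
      cm7 (Su x) φ = cm7 x (cm7 u φ) + ⟪u, x⟫ • φ := by
  intro x
  simpa only [hφ, one_smul, cm7Bilin_apply] using
    W4_row_general isCliffordMul_cm7Bilin (by simp) φ (hSu x)

end
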